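/- Let A be an m×n integer matrix with Δ = max_{i,j}|A_{i,j}|, let f_1, …, f_n : ℤ → ℝ, let l, u ∈ ℤ^n, and let S ⊆ {1,…,n} be partitioned into disjoint sets S₁ and S₂. Then for every r ∈ ℤ^m and η ∈ ℕ, the infimum in the min-plus convolution identity may be restricted to the finite index set where ‖r₁‖_∞ ≤ η₁Δ and ‖r₂‖_∞ ≤ η₂Δ; that is, V_S(r, η) = min { V_{S₁}(r₁, η₁) + V_{S₂}(r₂, η₂) : η₁ + η₂ = η, r₁ + r₂ = r, ‖r₁‖_∞ ≤ η₁Δ, ‖r₂‖_∞ ≤ η₂Δ }, with the convention that the minimum over the empty set, or over only +∞ values, is +∞. -/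

import Mathlib

/-- The partial optimum `V_S(r, η)`: the infimum (in `ℝ ∪ {+∞}`, modelled by
`EReal`, where the infimum of the empty set is `⊤ = +∞`) of `∑ i ∈ S, f i (g i)`
over integer vectors `g` (only the coordinates in `S` matter) satisfying
`∑ i ∈ S, g i • A_{•,i} = r`, `l i ≤ g i ≤ u i` for all `i ∈ S`, and
`∑ i ∈ S, |g i| = η`. -/
noncomputable def partialOpt {m n : ℕ} (A : Matrix (Fin m) (Fin n) ℤ)
    (f : Fin n → ℤ → ℝ) (l u : Fin n → ℤ) (S : Finset (Fin n))
    (r : Fin m → ℤ) (η : ℕ) : EReal :=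
  sInf { z : EReal | ∃ g : Fin n → ℤ,
    (∀ j, ∑ i ∈ S, g i * A j i = r j) ∧
    (∀ i ∈ S, l i ≤ g i ∧ g i ≤ u i) ∧
    (∑ i ∈ S, |g i| = (η : ℤ)) ∧
    z = ((∑ i ∈ S, f i (g i) : ℝ) : EReal) }

/-- The partial optimum is `+∞` or attained (the bounds make the feasible set finite). -/
theorem partialOpt_top_or_attained {m n : ℕ} (A : Matrix (Fin m) (Fin n) ℤ)
    (f : Fin n → ℤ → ℝ) (l u : Fin n → ℤ) (S : Finset (Fin n))
    (r : Fin m → ℤ) (η : ℕ) :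
    partialOpt A f l u S r η = ⊤ ∨ ∃ g : Fin n → ℤ,
    (∀ j, ∑ i ∈ S, g i * A j i = r j) ∧
    (∀ i ∈ S, l i ≤ g i ∧ g i ≤ u i) ∧
    (∑ i ∈ S, |g i| = (η : ℤ)) ∧
    partialOpt A f l u S r η = ((∑ i ∈ S, f i (g i) : ℝ) : EReal) := by
  unfold partialOpt
  set T := { z : EReal | ∃ g : Fin n → ℤ,
    (∀ j, ∑ i ∈ S, g i * A j i = r j) ∧
    (∀ i ∈ S, l i ≤ g i ∧ g i ≤ u i) ∧
    (∑ i ∈ S, |g i| = (η : ℤ)) ∧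
    z = ((∑ i ∈ S, f i (g i) : ℝ) : EReal) } with hT
  have hfin : T.Finite := by
    refine ((Set.finite_Icc (fun i => min (l i) 0) (fun i => max (u i) 0)).image
      (fun g : Fin n → ℤ => ((∑ i ∈ S, f i (g i) : ℝ) : EReal))).subset ?_
    rintro z ⟨g, -, hb, -, rfl⟩
    refine ⟨fun i => if i ∈ S then g i else 0, ⟨fun i => ?_, fun i => ?_⟩, ?_⟩
    · by_cases h : i ∈ S
      · simp [h, (hb i h).1]
      · simp [h]
    · by_cases h : i ∈ S
      · simp [h, (hb i h).2]
      · simp [h]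
    · have : ∑ i ∈ S, f i (if i ∈ S then g i else 0) = ∑ i ∈ S, f i (g i) :=
        Finset.sum_congr rfl fun i hi => by simp [hi]
      simp only [this]
  rcases T.eq_empty_or_nonempty with h | h
  · left; rw [h, sInf_empty]
  · right; exact h.csInf_mem hfin

theorem abs_sum_mul_le_of_entry_bound {m n : ℕ} (A : Matrix (Fin m) (Fin n) ℤ) (Δ : ℤ)
    (hΔ : ∀ i j, |A i j| ≤ Δ) (S : Finset (Fin n)) (g : Fin n → ℤ) (j : Fin m) :
    |∑ i ∈ S, g i * A j i| ≤ (∑ i ∈ S, |g i|) * Δ := by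
  refine (Finset.abs_sum_le_sum_abs _ _).trans ?_
  rw [Finset.sum_mul]
  refine Finset.sum_le_sum fun i _ => ?_
  rw [abs_mul]
  exact mul_le_mul_of_nonneg_left (hΔ j i) (abs_nonneg _)

/-- With `Δ` bounding the absolute values of the entries of
`A` (in particular `Δ = ‖A‖_∞`), and `S` partitioned into disjoint `S₁, S₂`,
the infimum in the min-plus convolution identity may be restricted to the
(finite) index set where `‖r₁‖_∞ ≤ η₁·Δ` and `‖r₂‖_∞ ≤ η₂·Δ`:
`V_S(r, η) = min { V_{S₁}(r₁, η₁) + V_{S₂}(r₂, η₂) : η₁ + η₂ = η, r₁ + r₂ = r,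
‖r₁‖_∞ ≤ η₁Δ, ‖r₂‖_∞ ≤ η₂Δ }`, the minimum over the empty set being `+∞`. -/
theorem partialOpt_convolution_restricted {m n : ℕ}
    (A : Matrix (Fin m) (Fin n) ℤ) (Δ : ℤ) (hΔ : ∀ i j, |A i j| ≤ Δ)
    (f : Fin n → ℤ → ℝ) (l u : Fin n → ℤ)
    (S S₁ S₂ : Finset (Fin n)) (hdisj : Disjoint S₁ S₂) (hunion : S = S₁ ∪ S₂)
    (r : Fin m → ℤ) (η : ℕ) :
    partialOpt A f l u S r η =
      sInf { z : EReal | ∃ (r₁ r₂ : Fin m → ℤ) (η₁ η₂ : ℕ),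
        r₁ + r₂ = r ∧ η₁ + η₂ = η ∧
        (∀ j, |r₁ j| ≤ (η₁ : ℤ) * Δ) ∧
        (∀ j, |r₂ j| ≤ (η₂ : ℤ) * Δ) ∧
        z = partialOpt A f l u S₁ r₁ η₁ + partialOpt A f l u S₂ r₂ η₂ } := by
  subst hunion
  apply le_antisymm
  · refine le_sInf ?_
    rintro z ⟨r₁, r₂, η₁, η₂, rfl, rfl, -, -, rfl⟩
    rcases partialOpt_top_or_attained A f l u S₁ r₁ η₁ with h₁ | ⟨g₁, ha₁, hb₁, hc₁, h₁⟩
    · rcases partialOpt_top_or_attained A f l u S₂ r₂ η₂ with h₂ | ⟨g₂, -, -, -, h₂⟩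
      · rw [h₁, h₂]; simp
      · rw [h₁, h₂, EReal.top_add_coe]; exact le_top
    · rcases partialOpt_top_or_attained A f l u S₂ r₂ η₂ with h₂ | ⟨g₂, ha₂, hb₂, hc₂, h₂⟩
      · rw [h₁, h₂, EReal.coe_add_top]; exact le_top
      · rw [h₁, h₂, ← EReal.coe_add]
        have key : ∀ {M : Type} [AddCommMonoid M] (F : Fin n → ℤ → M),
            ∑ i ∈ S₁ ∪ S₂, F i (if i ∈ S₁ then g₁ i else g₂ i)
              = ∑ i ∈ S₁, F i (g₁ i) + ∑ i ∈ S₂, F i (g₂ i) := by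
          intro M _ F
          rw [Finset.sum_union hdisj]
          congr 1
          · exact Finset.sum_congr rfl fun i hi => by simp [hi]
          · exact Finset.sum_congr rfl fun i hi => by
              simp [Finset.disjoint_right.mp hdisj hi]
        refine sInf_le ⟨fun i => if i ∈ S₁ then g₁ i else g₂ i, fun j => ?_, fun i hi => ?_, ?_, ?_⟩
        · rw [key (fun i x => x * A j i), ha₁, ha₂]; rfl
        · by_cases h : i ∈ S₁
          · simpa [h] using hb₁ i h
          · simpa [h] using hb₂ i ((Finset.mem_union.mp hi).resolve_left h)
        · rw [key (fun _ x => |x|), hc₁, hc₂]; push_cast; rfl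
        · rw [key f]
  · refine le_sInf ?_
    rintro z ⟨g, ha, hb, hc, rfl⟩
    have hn : ∀ T : Finset (Fin n), ((∑ i ∈ T, (g i).natAbs : ℕ) : ℤ) = ∑ i ∈ T, |g i| := by
      intro T; push_cast; rfl
    refine sInf_le_of_le ⟨fun j => ∑ i ∈ S₁, g i * A j i, fun j => ∑ i ∈ S₂, g i * A j i,
      ∑ i ∈ S₁, (g i).natAbs, ∑ i ∈ S₂, (g i).natAbs, ?_, ?_, fun j => ?_, fun j => ?_,
      rfl⟩ ?_
    · funext j
      rw [← ha j, Finset.sum_union hdisj]; rfl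
    · rw [← Finset.sum_union hdisj]
      exact_mod_cast (hn _).trans hc
    · rw [hn]; exact abs_sum_mul_le_of_entry_bound A Δ hΔ S₁ g j
    · rw [hn]; exact abs_sum_mul_le_of_entry_bound A Δ hΔ S₂ g j
    · rw [Finset.sum_union hdisj, EReal.coe_add]
      refine add_le_add (sInf_le ⟨g, fun _ => rfl, fun i hi => hb i (Finset.mem_union_left _ hi),
        (hn _).symm, rfl⟩) (sInf_le ⟨g, fun _ => rfl,
        fun i hi => hb i (Finset.mem_union_right _ hi), (hn _).symm, rfl⟩)
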